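/- Let P be a coordinate-replacement kernel on X = S^N with P-invariant set Ω, μ uniform on X, π = μ(·|Ω), and a good set G ⊆ Ω with π(G) > 0. Assume: (i) there is A < ∞ such that Ent_μ(F²) ≤ A·E_P^μ(F,F) for every nonnegative F supported in G; (ii) there are t_* ≥ 0, an integer L ≥ 1, and η ≥ 0 such that, uniformly in x ∈ Ω and integers s ≥ t_*, the discrete-time chain started at x satisfies P_x(∃ u ∈ {0,…,L} : X_{s+u} ∉ G) ≤ η. Set t_conf = 2A·log(e + log|Ω|), ζ = P(Poisson(t_conf) > L), and R = e^{−t_conf/A}·log|Ω| + A·π(G^c)/π(G). Then for every x ∈ Ω and every integer s ≥ t_*: ‖δ_x P^s e^{t_conf(P−I)} − π‖_TV ≤ 2(η+ζ) + sqrt(R/2) + π(G^c). Moreover, if 2(η+ζ) + sqrt(R/2) + π(G^c) + P(Poisson(2t_*) < t_*) ≤ 1/4, then the continuous-time chain e^{t(P−I)} satisfies t_mix(1/4) ≤ 2t_* + t_conf. -/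

import Mathlib

open Finset

noncomputable section

/-- `Ent_ρ(g) = ρ(g log g) − ρ(g) log ρ(g)`. -/
def ent {E : Type*} [Fintype E] (ρ g : E → ℝ) : ℝ :=
  (∑ x, ρ x * g x * Real.log (g x)) - (∑ x, ρ x * g x) * Real.log (∑ x, ρ x * g x)

/-- Dirichlet form `E_K^ρ(f,f) = (1/2) Σ_{x,y} ρ(x) K(x,y) (f(x)−f(y))²`. -/
def dirichlet {E : Type*} [Fintype E] (ρ : E → ℝ) (K : E → E → ℝ) (f : E → ℝ) : ℝ :=
  (1 / 2) * ∑ x, ∑ y, ρ x * K x y * (f x - f y) ^ 2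

/-- The uniform weight on a finite type. -/
def unif (E : Type*) [Fintype E] : E → ℝ := fun _ => (Fintype.card E : ℝ)⁻¹

/-- Total variation distance between two densities on a finite set. -/
def tvDist {X : Type*} [Fintype X] (f g : X → ℝ) : ℝ := (1 / 2) * ∑ x, |f x - g x|

/-- The kernel `P` killed on exiting `G`. -/
def killed {X : Type*} [Fintype X] [DecidableEq X] (P : Matrix X X ℝ) (G : Finset X) :
    Matrix X X ℝ :=
  fun x y => if x ∈ G ∧ y ∈ G then P x y else 0

/-- The density at `z` of `δ_x P^s e^{t(P−I)}` (Poissonization of the number of jumps). -/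
def burnThenHeat {X : Type*} [Fintype X] [DecidableEq X] (P : Matrix X X ℝ) (s : ℕ)
    (t : ℝ) (x z : X) : ℝ :=
  ∑' j : ℕ, Real.exp (-t) * t ^ j / (Nat.factorial j) * ((P ^ (s + j)) x z)



lemma pins_deriv (x : ℝ) (hx : 0 < x) :
    HasDerivAt (fun x : ℝ => Real.log x - (x - 1) * (5 * x + 1) / (2 * x * (x + 2)))
      ((x - 1) ^ 3 / (x ^ 2 * (x + 2) ^ 2)) x := by
  have h1 : HasDerivAt (fun x : ℝ => (x - 1) * (5 * x + 1)) (1 * (5 * x + 1) + (x - 1) * (5 * 1)) x :=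
    ((hasDerivAt_id x).sub_const 1).mul (((hasDerivAt_id x).const_mul 5).add_const 1)
  have h2 : HasDerivAt (fun x : ℝ => 2 * x * (x + 2)) (2 * 1 * (x + 2) + 2 * x * 1) x :=
    ((hasDerivAt_id x).const_mul 2).mul ((hasDerivAt_id x).add_const 2)
  have h3 := (Real.hasDerivAt_log hx.ne').sub (h1.div h2 (by positivity))
  refine h3.congr_deriv ?_
  field_simp
  ring

lemma pins_log_ge {x : ℝ} (hx : 0 < x) :
    0 ≤ Real.log x - (x - 1) * (5 * x + 1) / (2 * x * (x + 2)) := by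
  set f := (fun x : ℝ => Real.log x - (x - 1) * (5 * x + 1) / (2 * x * (x + 2))) with hf
  have hf1 : f 1 = 0 := by simp [hf]
  change 0 ≤ f x
  rw [← hf1]
  rcases le_total 1 x with h | h
  · have : MonotoneOn f (Set.Ici 1) := by
      apply monotoneOn_of_deriv_nonneg (convex_Ici 1)
      · intro y hy
        exact (pins_deriv y (lt_of_lt_of_le one_pos hy)).continuousAt.continuousWithinAt
      · intro y hy
        rw [interior_Ici] at hy
        exact (pins_deriv y (lt_trans one_pos hy)).differentiableAt.differentiableWithinAt
      · intro y hy
        rw [interior_Ici] at hy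
        have hy' : (1:ℝ) < y := hy
        rw [(pins_deriv y (lt_trans one_pos hy)).deriv]
        have : 0 ≤ y - 1 := by linarith
        positivity
    exact this (Set.mem_Ici.2 le_rfl) h h
  · have : AntitoneOn f (Set.Ioc 0 1) := by
      apply antitoneOn_of_deriv_nonpos (convex_Ioc 0 1)
      · intro y hy
        exact (pins_deriv y hy.1).continuousAt.continuousWithinAt
      · intro y hy
        rw [interior_Ioc] at hy
        exact (pins_deriv y hy.1).differentiableAt.differentiableWithinAt
      · intro y hy
        rw [interior_Ioc] at hy
        rw [(pins_deriv y hy.1).deriv]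
        have : 0 ≤ 1 - y := by linarith [hy.2]
        have h3 : (y - 1) ^ 3 = - (1 - y) ^ 3 := by ring
        rw [h3, neg_div]
        have := hy.1
        simp only [Left.neg_nonpos_iff]
        positivity
    exact this ⟨hx, h⟩ ⟨one_pos, le_rfl⟩ h

lemma pins_pt {x : ℝ} (hx : 0 ≤ x) :
    3 * (x - 1) ^ 2 ≤ (2 * x + 4) * (x * Real.log x - x + 1) := by
  rcases hx.eq_or_lt with rfl | hx
  · norm_num
  have h := pins_log_ge hx
  have h2 : (x - 1) * (5 * x + 1) / (2 * x * (x + 2)) * (2 * x * (x + 2)) = (x - 1) * (5 * x + 1) := by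
    field_simp
  have h3 : 0 < 2 * x * (x + 2) := by positivity
  nlinarith [mul_nonneg h h3.le]

/-- unnormalised relative entropy -/
def relH {X : Type*} [Fintype X] (g : ℝ) (k : X → ℝ) : ℝ :=
  ∑ x, k x * Real.log (k x) - (∑ x, k x) * Real.log (∑ x, k x) + (∑ x, k x) * Real.log g

lemma pins_pt2 {k q : ℝ} (hk : 0 ≤ k) (hq : 0 < q) :
    3 * (k - q) ^ 2 ≤ (2 * k + 4 * q) * (k * Real.log k - k * Real.log q - k + q) := by
  have h := pins_pt (div_nonneg hk hq.le)
  rcases hk.eq_or_lt with rfl | hk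
  · simp; nlinarith
  rw [Real.log_div hk.ne' hq.ne'] at h
  have h2 := mul_le_mul_of_nonneg_left h (sq_nonneg q)
  have e1 : q ^ 2 * (3 * (k / q - 1) ^ 2) = 3 * (k - q) ^ 2 := by field_simp
  have e2 : q ^ 2 * ((2 * (k / q) + 4) * (k / q * (Real.log k - Real.log q) - k / q + 1)) =
    (2 * k + 4 * q) * (k * Real.log k - k * Real.log q - k + q) := by field_simp
  rw [e1, e2] at h2
  exact h2

lemma pinsker_fin {X : Type*} [Fintype X] [DecidableEq X] (G : Finset X) (hG : G.Nonempty)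
    (k : X → ℝ) (hk : ∀ x, 0 ≤ k x) (hs : ∀ x, x ∉ G → k x = 0) :
    ∑ x, |k x - if x ∈ G then (∑ y, k y) / (G.card : ℝ) else 0| ≤
      Real.sqrt (2 * (∑ y, k y) * relH (G.card : ℝ) k) := by
  set M := ∑ y, k y with hM
  have hM0 : 0 ≤ M := Finset.sum_nonneg fun x _ => hk x
  have hg : (0:ℝ) < G.card := by exact_mod_cast hG.card_pos
  rcases hM0.eq_or_lt with h0 | hMp
  · have : ∀ x, k x = 0 := by
      intro x
      exact (Finset.sum_eq_zero_iff_of_nonneg (fun x _ => hk x)).1 h0.symm x (Finset.mem_univ x)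
    simp [this, ← h0]
  set q := M / (G.card : ℝ) with hq
  have hqp : 0 < q := by positivity
  have hMG : M = ∑ x ∈ G, k x := by
    rw [hM]; symm
    exact Finset.sum_subset (Finset.subset_univ _) (fun x _ hx => hs x hx)
  have e1 : ∑ x, |k x - if x ∈ G then q else 0| = ∑ x ∈ G, |k x - q| := by
    symm
    rw [← Finset.sum_subset (Finset.subset_univ G)]
    · apply Finset.sum_congr rfl
      intro x hx
      simp [hx]
    · intro x _ hx
      simp [hx, hs x hx]
  rw [e1]
  apply Real.le_sqrt_of_sq_le
  have hD : ∀ x ∈ G, 0 ≤ k x * Real.log (k x) - k x * Real.log q - k x + q := by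
    intro x _
    have := pins_pt2 (hk x) hqp
    have h2 : 0 < 2 * k x + 4 * q := by have := hk x; positivity
    by_contra hc
    push Not at hc
    nlinarith [sq_nonneg (k x - q)]
  have hq2 : Real.log q = Real.log M - Real.log G.card := Real.log_div hMp.ne' hg.ne'
  have e2 : ∑ x ∈ G, (k x * Real.log (k x) - k x * Real.log q - k x + q) = relH G.card k := by
    unfold relH
    rw [Finset.sum_add_distrib, Finset.sum_sub_distrib, Finset.sum_sub_distrib, ← Finset.sum_mul,
      ← hMG, hq2]
    have : ∑ x ∈ G, k x * Real.log (k x) = ∑ x, k x * Real.log (k x) :=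
      Finset.sum_subset (Finset.subset_univ _) (fun x _ hx => by simp [hs x hx])
    rw [this]
    have : (G.card : ℝ) * q = M := by rw [hq]; field_simp
    simp only [Finset.sum_const, nsmul_eq_mul, this, ← hM]
    ring
  have e3 : ∑ x ∈ G, (2 * k x + 4 * q) / 3 = 2 * M := by
    rw [← Finset.sum_div, Finset.sum_add_distrib, ← Finset.mul_sum, ← hMG]
    have : (G.card : ℝ) * q = M := by rw [hq]; field_simp
    simp only [Finset.sum_const, nsmul_eq_mul]
    linarith
  rw [← e2, ← e3]
  apply Finset.sum_sq_le_sum_mul_sum_of_sq_le_mul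
  · intro x _; have := hk x; positivity
  · exact hD
  · intro x _
    rw [sq_abs]
    have := pins_pt2 (hk x) hqp
    linarith

lemma sqrt_log_ineq {a b : ℝ} (ha : 0 < a) (hb : 0 < b) :
    (Real.sqrt a - Real.sqrt b) ^ 2 ≤ (a - b) * (Real.log a - Real.log b) := by
  wlog h : b ≤ a generalizing a b
  · have := this hb ha (le_of_not_ge h)
    nlinarith
  have hu := Real.sqrt_pos.2 ha
  have hv := Real.sqrt_pos.2 hb
  have hvu := Real.sqrt_le_sqrt h
  have h1 : Real.log a - Real.log b ≥ 1 - b / a := by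
    have := Real.one_sub_inv_le_log_of_pos (div_pos ha hb)
    rw [Real.log_div ha.ne' hb.ne', inv_div] at this
    exact this
  have h2 : (a - b) * (1 - b / a) ≤ (a - b) * (Real.log a - Real.log b) :=
    mul_le_mul_of_nonneg_left h1 (by linarith)
  refine le_trans ?_ h2
  have h3 : (a - b) * (1 - b / a) = (a - b) ^ 2 / a := by field_simp
  rw [h3, le_div_iff₀ ha]
  set u := Real.sqrt a
  set v := Real.sqrt b
  have ea : a = u ^ 2 := (Real.sq_sqrt ha.le).symm
  have eb : b = v ^ 2 := (Real.sq_sqrt hb.le).symm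
  rw [ea, eb]
  have : (u ^ 2 - v ^ 2) ^ 2 = (u - v) ^ 2 * (u + v) ^ 2 := by ring
  rw [this]
  apply mul_le_mul_of_nonneg_left _ (sq_nonneg _)
  nlinarith

lemma killed_symm {X : Type*} [Fintype X] [DecidableEq X] {P : Matrix X X ℝ} (G : Finset X)
    (hsym : ∀ x y, P x y = P y x) (x y : X) : killed P G x y = killed P G y x := by
  unfold killed
  simp only [hsym x y, and_comm]

lemma kappa_sum {X : Type*} [Fintype X] [DecidableEq X] {P : Matrix X X ℝ} {Ω G : Finset X}
    (hP0 : ∀ x y, 0 ≤ P x y) (hP1 : ∀ x, ∑ y, P x y = 1) (hsym : ∀ x y, P x y = P y x)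
    (hΩ : ∀ x ∈ Ω, ∀ y, P x y ≠ 0 → y ∈ Ω) (hGΩ : G ⊆ Ω) :
    ∑ x ∈ G, (1 - ∑ y, killed P G x y) ≤ (Ω.card : ℝ) - G.card := by
  have h1 : ∀ x ∈ G, (1 - ∑ y, killed P G x y) = ∑ y ∈ Ω \ G, P x y := by
    intro x hx
    rw [← hP1 x, ← Finset.sum_sub_distrib]
    symm
    rw [← Finset.sum_subset (Finset.subset_univ (Ω \ G))]
    · apply Finset.sum_congr rfl
      intro y hy
      simp [killed, (Finset.mem_sdiff.1 hy).2]
    · intro y _ hy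
      by_cases hyG : y ∈ G
      · simp [killed, hx, hyG]
      · have : P x y = 0 := by
          by_contra hc
          exact hy (Finset.mem_sdiff.2 ⟨hΩ x (hGΩ hx) y hc, hyG⟩)
        simp [killed, this]
  have hc : ∑ x ∈ G, ∑ y ∈ Ω \ G, P x y = ∑ y ∈ Ω \ G, ∑ x ∈ G, P x y := Finset.sum_comm
  rw [Finset.sum_congr rfl h1, hc]
  have h2 : ∀ y ∈ Ω \ G, ∑ x ∈ G, P x y ≤ 1 := by
    intro y _
    rw [← hP1 y]
    simp_rw [hsym _ y]
    exact Finset.sum_le_sum_of_subset_of_nonneg (Finset.subset_univ _) fun _ _ _ => hP0 _ _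
  have h3 := Finset.sum_le_sum h2
  rw [Finset.sum_const, nsmul_eq_mul, mul_one, Finset.card_sdiff_of_subset hGΩ,
    Nat.cast_sub (Finset.card_le_card hGΩ)] at h3
  exact h3

lemma dirichlet_split {X : Type*} [Fintype X] [DecidableEq X] {P : Matrix X X ℝ} {G : Finset X}
    (hP1 : ∀ x, ∑ y, P x y = 1) (hsym : ∀ x y, P x y = P y x)
    (k : X → ℝ) (hk : ∀ x, 0 ≤ k x) (hs : ∀ x, x ∉ G → k x = 0) :
    (1 / 2) * ∑ x, ∑ y, P x y * (Real.sqrt (k x) - Real.sqrt (k y)) ^ 2 =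
    (1 / 2) * ∑ x, ∑ y, killed P G x y * (Real.sqrt (k x) - Real.sqrt (k y)) ^ 2 +
      ∑ x, (1 - ∑ y, killed P G x y) * k x := by
  have h1 : ∀ x y, P x y * (Real.sqrt (k x) - Real.sqrt (k y)) ^ 2 =
      killed P G x y * (Real.sqrt (k x) - Real.sqrt (k y)) ^ 2 +
      (P x y - killed P G x y) * k x + (P x y - killed P G x y) * k y := by
    intro x y
    by_cases hx : x ∈ G
    · by_cases hy : y ∈ G
      · simp [killed, hx, hy]
      · simp [killed, hs y hy, hy, Real.sq_sqrt (hk x)]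
    · simp [killed, hs x hx, hx, Real.sq_sqrt (hk y)]
  simp_rw [h1, Finset.sum_add_distrib]
  have h2 : ∑ x, ∑ y, (P x y - killed P G x y) * k y = ∑ x, ∑ y, (P x y - killed P G x y) * k x := by
    rw [Finset.sum_comm]
    apply Finset.sum_congr rfl; intro x _
    apply Finset.sum_congr rfl; intro y _
    rw [hsym, killed_symm G hsym]
  have h3 : ∑ x, ∑ y, (P x y - killed P G x y) * k x = ∑ x, (1 - ∑ y, killed P G x y) * k x := by
    apply Finset.sum_congr rfl; intro x _
    rw [← Finset.sum_mul, Finset.sum_sub_distrib, hP1]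
  rw [h2, h3]; ring

lemma static_ineq {X : Type*} [Fintype X] [DecidableEq X] {P : Matrix X X ℝ} {Ω G : Finset X}
    (hP0 : ∀ x y, 0 ≤ P x y) (hP1 : ∀ x, ∑ y, P x y = 1) (hsym : ∀ x y, P x y = P y x)
    (hΩ : ∀ x ∈ Ω, ∀ y, P x y ≠ 0 → y ∈ Ω) (hGΩ : G ⊆ Ω) (hG : G.Nonempty)
    (k k' : X → ℝ) (hk : ∀ x, 0 ≤ k x) (hs : ∀ x, x ∉ G → k x = 0)
    (hk' : ∀ z, k' z = ∑ y, k y * killed P G y z - k z) (hz : ∀ z, k z = 0 → k' z = 0)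
    (hM1 : ∑ x, k x ≤ 1) :
    ∑ x, k' x * (Real.log (k x) - (Real.log (∑ y, k y) - Real.log G.card)) ≤
      - ((1 / 2) * ∑ x, ∑ y, P x y * (Real.sqrt (k x) - Real.sqrt (k y)) ^ 2)
      + ((Ω.card : ℝ) - G.card) / G.card := by
  have hg : (0:ℝ) < G.card := by exact_mod_cast hG.card_pos
  rw [dirichlet_split hP1 hsym k hk hs]
  set M := ∑ y, k y with hM
  have hM0 : 0 ≤ M := Finset.sum_nonneg fun x _ => hk x
  set a := Real.log M - Real.log G.card with ha
  set Q := killed P G with hQ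
  have hQs : ∀ x y, Q x y = Q y x := killed_symm G hsym
  have hQ0 : ∀ x y, 0 ≤ Q x y := by
    intro x y; rw [hQ]; unfold killed; split_ifs; exacts [hP0 _ _, le_rfl]
  have hQP : ∀ x y, Q x y ≤ P x y := by
    intro x y; rw [hQ]; unfold killed; split_ifs; exacts [le_rfl, hP0 _ _]
  set κ : X → ℝ := fun x => 1 - ∑ y, Q x y with hκ
  have hκ0 : ∀ x, 0 ≤ κ x := by
    intro x; simp only [hκ]; rw [← hP1 x]
    exact sub_nonneg.2 (Finset.sum_le_sum fun y _ => hQP x y)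
  have e1 : ∀ x, k' x * (Real.log (k x) - a) =
      (∑ y, Q x y * (k y - k x) * (Real.log (k x) - a)) - κ x * k x * (Real.log (k x) - a) := by
    intro x
    rw [hk', ← Finset.sum_mul, ← sub_mul]
    congr 1
    simp only [hκ, mul_sub, Finset.sum_sub_distrib, sub_mul, ← Finset.sum_mul]
    simp_rw [hQs _ x, mul_comm (k _) (Q _ _)]
    ring
  simp_rw [e1]
  rw [Finset.sum_sub_distrib]
  have e2 : ∑ x, ∑ y, Q x y * (k y - k x) * (Real.log (k x) - a) =
      - ((1/2) * ∑ x, ∑ y, Q x y * ((k x - k y) * (Real.log (k x) - Real.log (k y)))) := by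
    have : ∑ x, ∑ y, Q x y * (k y - k x) * (Real.log (k x) - a) =
      ∑ x, ∑ y, Q x y * (k x - k y) * (Real.log (k y) - a) := by
      rw [Finset.sum_comm]
      apply Finset.sum_congr rfl; intro x _
      apply Finset.sum_congr rfl; intro y _
      rw [hQs]
    have h2 : ∑ x, ∑ y, Q x y * ((k x - k y) * (Real.log (k x) - Real.log (k y))) =
      - ∑ x, ∑ y, Q x y * (k y - k x) * (Real.log (k x) - a) -
       ∑ x, ∑ y, Q x y * (k x - k y) * (Real.log (k y) - a) := by
      rw [← Finset.sum_neg_distrib, ← Finset.sum_sub_distrib]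
      apply Finset.sum_congr rfl; intro x _
      rw [← Finset.sum_neg_distrib, ← Finset.sum_sub_distrib]
      apply Finset.sum_congr rfl; intro y _
      ring
    rw [h2, ← this]; ring
  have hzz : ∀ x y, k x = 0 → k y ≠ 0 → Q x y = 0 := by
    intro x y hx hy
    have h := hz x hx
    rw [hk', hx, sub_zero] at h
    have := (Finset.sum_eq_zero_iff_of_nonneg
      (fun y _ => mul_nonneg (hk y) (hQ0 y x))).1 h y (Finset.mem_univ y)
    rw [hQs]
    exact (mul_eq_zero.1 this).resolve_left hy
  have e3 : ∑ x, ∑ y, Q x y * (Real.sqrt (k x) - Real.sqrt (k y)) ^ 2 ≤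
      ∑ x, ∑ y, Q x y * ((k x - k y) * (Real.log (k x) - Real.log (k y))) := by
    apply Finset.sum_le_sum; intro x _
    apply Finset.sum_le_sum; intro y _
    by_cases hx : k x = 0
    · by_cases hy : k y = 0
      · simp [hx, hy]
      · simp [hzz x y hx hy]
    · by_cases hy : k y = 0
      · rw [hQs]; simp [hzz y x hy hx]
      · exact mul_le_mul_of_nonneg_left
          (sqrt_log_ineq (lt_of_le_of_ne (hk x) (Ne.symm hx)) (lt_of_le_of_ne (hk y) (Ne.symm hy)))
          (hQ0 x y)
  have e4 : ∑ x, κ x * k x - ∑ x, κ x * k x * (Real.log (k x) - a) ≤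
      ∑ x ∈ G, κ x * (1 / (G.card : ℝ)) := by
    rw [← Finset.sum_sub_distrib, ← Finset.sum_subset (Finset.subset_univ G)]
    swap
    · intro x _ hx; simp [hs x hx]
    apply Finset.sum_le_sum
    intro x _
    rw [mul_assoc, ← mul_sub]
    apply mul_le_mul_of_nonneg_left _ (hκ0 x)
    rcases (hk x).eq_or_lt with h0 | hp
    · rw [← h0]; simp
    have hkM : k x ≤ M := Finset.single_le_sum (f := k) (fun x _ => hk x) (Finset.mem_univ x)
    have hMp : 0 < M := lt_of_lt_of_le hp hkM
    have h5 : Real.log (k x) - a = Real.log (k x * G.card / M) := by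
      rw [Real.log_div (by positivity) hMp.ne', Real.log_mul hp.ne' hg.ne', ha]; ring
    have h6 := Real.one_sub_inv_le_log_of_pos (show 0 < k x * G.card / M by positivity)
    rw [h5]
    have h7 := mul_le_mul_of_nonneg_left h6 hp.le
    have h8 : k x * (1 - (k x * G.card / M)⁻¹) = k x - M / G.card := by field_simp
    rw [h8] at h7
    have h9 : M / G.card ≤ 1 / G.card := by gcongr
    linarith
  have e5 := kappa_sum hP0 hP1 hsym hΩ hGΩ
  have e6 : ∑ x ∈ G, κ x * (1 / (G.card : ℝ)) ≤ ((Ω.card : ℝ) - G.card) / G.card := by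
    rw [← Finset.sum_mul, mul_one_div]
    gcongr
  rw [e2]
  linarith

lemma lsi_relH {X : Type*} [Fintype X] [DecidableEq X] {P : Matrix X X ℝ} {G : Finset X} {A : ℝ}
    (hG : G.Nonempty)
    (hL : ∀ F : X → ℝ, (∀ x, 0 ≤ F x) → (∀ x, F x ≠ 0 → x ∈ G) →
        ent (unif X) (fun x => (F x) ^ 2) ≤ A * dirichlet (unif X) P F)
    (k : X → ℝ) (hk : ∀ x, 0 ≤ k x) (hs : ∀ x, x ∉ G → k x = 0) :
    relH G.card k ≤ A * ((1 / 2) * ∑ x, ∑ y, P x y * (Real.sqrt (k x) - Real.sqrt (k y)) ^ 2) := by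
  have hg : (0:ℝ) < G.card := by exact_mod_cast hG.card_pos
  set n : ℝ := (Fintype.card X : ℝ) with hn
  have hgn : (G.card : ℝ) ≤ n := by rw [hn]; exact_mod_cast Finset.card_le_univ G
  have hnp : 0 < n := by linarith
  have h := hL (fun x => Real.sqrt (k x)) (fun x => Real.sqrt_nonneg _) (by
    intro x hx
    by_contra hc
    simp [hs x hc] at hx)
  simp only [ent, dirichlet, unif, ← hn, Real.sq_sqrt (hk _)] at h
  have hM0 : 0 ≤ ∑ x, k x := Finset.sum_nonneg fun x _ => hk x
  simp only [mul_assoc, ← Finset.mul_sum] at h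
  set M := ∑ y, k y with hM
  have h1 : M * Real.log (n⁻¹ * M) = M * Real.log M - M * Real.log n := by
    rcases hM0.eq_or_lt with h0 | hp
    · simp [← h0]
    · rw [Real.log_mul (by positivity) hp.ne', Real.log_inv]; ring
  rw [h1] at h
  have h2 : M * Real.log G.card ≤ M * Real.log n :=
    mul_le_mul_of_nonneg_left (Real.log_le_log hg hgn) hM0
  unfold relH
  rw [← hM]
  have h3 := mul_le_mul_of_nonneg_left h hnp.le
  have e1 : ∀ a b : ℝ, n * (n⁻¹ * a - n⁻¹ * b) = a - b := by intro a b; field_simp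
  have e2 : ∀ a : ℝ, n * (A * (1 / 2 * (n⁻¹ * a))) = A * (1/2 * a) := by intro a; field_simp
  rw [e1, e2] at h3
  linarith

/-- Poisson weights -/
def pois (t : ℝ) (j : ℕ) : ℝ := Real.exp (-t) * t ^ j / (Nat.factorial j)

lemma pois_nonneg {t : ℝ} (ht : 0 ≤ t) (j : ℕ) : 0 ≤ pois t j := by
  unfold pois; positivity

lemma pois_pos {t : ℝ} (ht : 0 < t) (j : ℕ) : 0 < pois t j := by
  unfold pois; positivity

lemma expSum (t : ℝ) : HasSum (fun j : ℕ => t ^ j / (Nat.factorial j : ℝ)) (Real.exp t) := by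
  rw [Real.exp_eq_exp_ℝ]
  exact NormedSpace.expSeries_div_hasSum_exp t

lemma pois_hasSum (t : ℝ) : HasSum (pois t) 1 := by
  have := (expSum t).mul_left (Real.exp (-t))
  rw [← Real.exp_add, neg_add_cancel, Real.exp_zero] at this
  have h2 : pois t = fun j : ℕ => Real.exp (-t) * (t ^ j / (Nat.factorial j : ℝ)) := by
    funext j; unfold pois; ring
  rw [h2]; exact this

lemma ps_summable (t : ℝ) {b : ℕ → ℝ} (hb : ∀ j, |b j| ≤ 1) :
    Summable (fun j : ℕ => t ^ j / (Nat.factorial j : ℝ) * b j) := by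
  apply Summable.of_norm_bounded (expSum |t|).summable
  intro j
  rw [Real.norm_eq_abs, abs_mul, abs_div, abs_pow, Nat.abs_cast]
  exact mul_le_of_le_one_right (by positivity) (hb j)

lemma pois_mul_eq (t : ℝ) (b : ℕ → ℝ) (j : ℕ) :
    pois t j * b j = Real.exp (-t) * (t ^ j / (Nat.factorial j : ℝ) * b j) := by
  unfold pois; ring

lemma pois_summable (t : ℝ) {b : ℕ → ℝ} (hb : ∀ j, |b j| ≤ 1) :
    Summable (fun j : ℕ => pois t j * b j) := by
  simp_rw [pois_mul_eq]
  exact (ps_summable t hb).mul_left _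

lemma ps_deriv (t : ℝ) {b : ℕ → ℝ} (hb : ∀ j, |b j| ≤ 1) :
    HasDerivAt (fun t : ℝ => ∑' j : ℕ, t ^ j / (Nat.factorial j : ℝ) * b j)
      (∑' j : ℕ, t ^ j / (Nat.factorial j : ℝ) * b (j + 1)) t := by
  set r := |t| + 1
  have hr : 0 < r := by positivity
  set u : ℕ → ℝ := fun j => (j : ℝ) * r ^ (j - 1) / (Nat.factorial j : ℝ) with hu
  have hus : ∀ (s : ℝ) (j : ℕ), ((j + 1 : ℕ) : ℝ) * s ^ (j + 1 - 1) / (Nat.factorial (j + 1) : ℝ) =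
      s ^ j / (Nat.factorial j : ℝ) := by
    intro s j
    rw [Nat.factorial_succ]
    push_cast
    have : (Nat.factorial j : ℝ) ≠ 0 := by positivity
    field_simp
  have hsu : Summable u := by
    rw [← summable_nat_add_iff 1]
    simp only [hu, hus]
    exact (expSum r).summable
  have key := hasDerivAt_tsum_of_isPreconnected (u := u) (t := Metric.ball (0:ℝ) r)
    (g := fun (j : ℕ) (t : ℝ) => t ^ j / (Nat.factorial j : ℝ) * b j)
    (g' := fun (j : ℕ) (t : ℝ) => (j : ℝ) * t ^ (j - 1) / (Nat.factorial j : ℝ) * b j)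
    (y₀ := t) (y := t)
    hsu Metric.isOpen_ball (convex_ball 0 r).isPreconnected
    (fun j y _ => ((hasDerivAt_pow j y).div_const _).mul_const _)
    (by
      intro j y hy
      rw [mem_ball_zero_iff, Real.norm_eq_abs] at hy
      rw [Real.norm_eq_abs, abs_mul, abs_div, abs_mul, abs_pow, Nat.abs_cast, Nat.abs_cast]
      refine (mul_le_of_le_one_right (by positivity) (hb j)).trans ?_
      simp only [hu]
      gcongr)
    (by simp [r]) (ps_summable t hb) (by simp [r])
  refine key.congr_deriv ?_
  rw [Summable.tsum_eq_zero_add]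
  · simp only [hus]; simp
  · rw [← summable_nat_add_iff 1]
    simp only [hus]
    exact ps_summable t (fun j => hb (j + 1))

lemma pois_deriv (t : ℝ) {b : ℕ → ℝ} (hb : ∀ j, |b j| ≤ 1) :
    HasDerivAt (fun t : ℝ => ∑' j : ℕ, pois t j * b j)
      (∑' j : ℕ, pois t j * b (j + 1) - ∑' j : ℕ, pois t j * b j) t := by
  have e : ∀ (s : ℝ) (b : ℕ → ℝ), ∑' j : ℕ, pois s j * b j =
      Real.exp (-s) * ∑' j : ℕ, s ^ j / (Nat.factorial j : ℝ) * b j := by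
    intro s b
    simp_rw [pois_mul_eq]
    rw [tsum_mul_left]
  rw [e t b, e t (fun j => b (j + 1))]
  simp_rw [e]
  have h1 : HasDerivAt (fun t : ℝ => Real.exp (-t)) (Real.exp (-t) * (-1)) t :=
    (hasDerivAt_neg t).exp
  refine (h1.mul (ps_deriv t hb)).congr_deriv ?_
  ring

lemma pois_zero (b : ℕ → ℝ) : ∑' j : ℕ, pois 0 j * b j = b 0 := by
  rw [tsum_eq_single 0]
  · simp [pois]
  · intro j hj; simp [pois, hj]

lemma pois_tsum_zero {t : ℝ} (ht : 0 < t) {b : ℕ → ℝ} (hb0 : ∀ j, 0 ≤ b j) (hb : ∀ j, |b j| ≤ 1)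
    (h : ∑' j : ℕ, pois t j * b j = 0) (j : ℕ) : b j = 0 := by
  have h1 := (pois_summable t hb).hasSum
  rw [h, hasSum_zero_iff_of_nonneg (fun j => mul_nonneg (pois_nonneg ht.le j) (hb0 j))] at h1
  have := congrFun h1 j
  exact (mul_eq_zero.1 this).resolve_left (pois_pos ht j).ne'

lemma pois_xlogx {t : ℝ} (ht : 0 < t) {b : ℕ → ℝ} (hb0 : ∀ j, 0 ≤ b j) (hb : ∀ j, |b j| ≤ 1) :
    HasDerivAt (fun t : ℝ => (∑' j : ℕ, pois t j * b j) * Real.log (∑' j : ℕ, pois t j * b j))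
      ((∑' j : ℕ, pois t j * b (j + 1) - ∑' j : ℕ, pois t j * b j) *
        (Real.log (∑' j : ℕ, pois t j * b j) + 1)) t := by
  by_cases h : ∑' j : ℕ, pois t j * b j = 0
  · have hz := pois_tsum_zero ht hb0 hb h
    simp [hz, hasDerivAt_const]
  · have h1 := (Real.hasDerivAt_mul_log h).comp t (pois_deriv t hb)
    refine h1.congr_deriv ?_
    ring

lemma killed_nonneg {X : Type*} [Fintype X] [DecidableEq X] {P : Matrix X X ℝ} (G : Finset X)
    (hP0 : ∀ x y, 0 ≤ P x y) (x y : X) : 0 ≤ killed P G x y := by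
  unfold killed; split_ifs; exacts [hP0 _ _, le_rfl]

lemma killed_le {X : Type*} [Fintype X] [DecidableEq X] {P : Matrix X X ℝ} (G : Finset X)
    (hP0 : ∀ x y, 0 ≤ P x y) (x y : X) : killed P G x y ≤ P x y := by
  unfold killed; split_ifs; exacts [le_rfl, hP0 _ _]

/-- killed law after `j` steps -/
def kl {X : Type*} [Fintype X] [DecidableEq X] (P : Matrix X X ℝ) (G : Finset X)
    (ν : X → ℝ) (j : ℕ) (z : X) : ℝ := ∑ y, ν y * (killed P G ^ j) y z

lemma kl_zero {X : Type*} [Fintype X] [DecidableEq X] (P : Matrix X X ℝ) (G : Finset X)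
    (ν : X → ℝ) (z : X) : kl P G ν 0 z = ν z := by
  simp [kl, Matrix.one_apply]

lemma kl_succ {X : Type*} [Fintype X] [DecidableEq X] (P : Matrix X X ℝ) (G : Finset X)
    (ν : X → ℝ) (j : ℕ) (z : X) : kl P G ν (j + 1) z = ∑ y, kl P G ν j y * killed P G y z := by
  simp only [kl, pow_succ, Matrix.mul_apply, Finset.mul_sum, Finset.sum_mul]
  rw [Finset.sum_comm]
  simp only [mul_assoc]

section
variable {X : Type*} [Fintype X] [DecidableEq X] {P : Matrix X X ℝ} {Ω G : Finset X} {ν : X → ℝ}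

lemma kl_nonneg (hP0 : ∀ x y, 0 ≤ P x y) (hν0 : ∀ x, 0 ≤ ν x) (j : ℕ) (z : X) :
    0 ≤ kl P G ν j z := by
  induction j generalizing z with
  | zero => rw [kl_zero]; exact hν0 z
  | succ j ih =>
    rw [kl_succ]
    exact Finset.sum_nonneg fun y _ => mul_nonneg (ih y) (killed_nonneg G hP0 y z)

lemma kl_supp (hνs : ∀ x, x ∉ G → ν x = 0) (j : ℕ) (z : X) (hz : z ∉ G) :
    kl P G ν j z = 0 := by
  cases j with
  | zero => rw [kl_zero]; exact hνs z hz
  | succ j =>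
    rw [kl_succ]
    exact Finset.sum_eq_zero fun y _ => by simp [killed, hz]

lemma kl_mass_succ (hP0 : ∀ x y, 0 ≤ P x y) (hP1 : ∀ x, ∑ y, P x y = 1)
    (hν0 : ∀ x, 0 ≤ ν x) (j : ℕ) :
    ∑ z, kl P G ν (j + 1) z ≤ ∑ z, kl P G ν j z := by
  simp_rw [kl_succ]
  rw [Finset.sum_comm]
  apply Finset.sum_le_sum
  intro y _
  rw [← Finset.mul_sum]
  apply mul_le_of_le_one_right (kl_nonneg hP0 hν0 j y)
  rw [← hP1 y]
  exact Finset.sum_le_sum fun z _ => killed_le G hP0 y z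

lemma kl_mass_anti (hP0 : ∀ x y, 0 ≤ P x y) (hP1 : ∀ x, ∑ y, P x y = 1)
    (hν0 : ∀ x, 0 ≤ ν x) : Antitone (fun j => ∑ z, kl P G ν j z) :=
  antitone_nat_of_succ_le (kl_mass_succ hP0 hP1 hν0)

lemma kl_mass_le (hP0 : ∀ x y, 0 ≤ P x y) (hP1 : ∀ x, ∑ y, P x y = 1)
    (hν0 : ∀ x, 0 ≤ ν x) (hν1 : ∑ x, ν x ≤ 1) (j : ℕ) :
    ∑ z, kl P G ν j z ≤ 1 := by
  have := kl_mass_anti (G := G) hP0 hP1 hν0 (Nat.zero_le j)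
  simp only [kl_zero] at this
  exact this.trans hν1

lemma kl_abs (hP0 : ∀ x y, 0 ≤ P x y) (hP1 : ∀ x, ∑ y, P x y = 1)
    (hν0 : ∀ x, 0 ≤ ν x) (hν1 : ∑ x, ν x ≤ 1) (z : X) (j : ℕ) :
    |kl P G ν j z| ≤ 1 := by
  rw [abs_of_nonneg (kl_nonneg hP0 hν0 j z)]
  exact (Finset.single_le_sum (f := kl P G ν j) (fun y _ => kl_nonneg hP0 hν0 j y)
    (Finset.mem_univ z)).trans (kl_mass_le hP0 hP1 hν0 hν1 j)

lemma pois_sum_comm {X : Type*} [Fintype X] (t : ℝ) {b : X → ℕ → ℝ} (hb : ∀ z j, |b z j| ≤ 1) :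
    ∑ z, ∑' j : ℕ, pois t j * b z j = ∑' j : ℕ, pois t j * ∑ z, b z j := by
  rw [← Summable.tsum_finsetSum (fun z _ => pois_summable t (hb z))]
  simp_rw [Finset.mul_sum]

/-- killed heat flow -/
def kh {X : Type*} [Fintype X] [DecidableEq X] (P : Matrix X X ℝ) (G : Finset X)
    (ν : X → ℝ) (t : ℝ) (z : X) : ℝ := ∑' j : ℕ, pois t j * kl P G ν j z

lemma kh_mass (hP0 : ∀ x y, 0 ≤ P x y) (hP1 : ∀ x, ∑ y, P x y = 1)
    (hν0 : ∀ x, 0 ≤ ν x) (hν1 : ∑ x, ν x ≤ 1) (t : ℝ) :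
    ∑ z, kh P G ν t z = ∑' j : ℕ, pois t j * ∑ z, kl P G ν j z :=
  pois_sum_comm t (b := fun z j => kl P G ν j z) (kl_abs hP0 hP1 hν0 hν1)

lemma mass_abs (hP0 : ∀ x y, 0 ≤ P x y) (hP1 : ∀ x, ∑ y, P x y = 1)
    (hν0 : ∀ x, 0 ≤ ν x) (hν1 : ∑ x, ν x ≤ 1) (j : ℕ) : |∑ z, kl P G ν j z| ≤ 1 := by
  rw [abs_of_nonneg (Finset.sum_nonneg fun y _ => kl_nonneg hP0 hν0 j y)]
  exact kl_mass_le hP0 hP1 hν0 hν1 j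

lemma kh_nonneg (hP0 : ∀ x y, 0 ≤ P x y)
    (hν0 : ∀ x, 0 ≤ ν x) {t : ℝ} (ht : 0 ≤ t) (z : X) : 0 ≤ kh P G ν t z :=
  tsum_nonneg fun j => mul_nonneg (pois_nonneg ht j) (kl_nonneg hP0 hν0 j z)

lemma kh_mass_le (hP0 : ∀ x y, 0 ≤ P x y) (hP1 : ∀ x, ∑ y, P x y = 1)
    (hν0 : ∀ x, 0 ≤ ν x) (hν1 : ∑ x, ν x ≤ 1) {t : ℝ} (ht : 0 ≤ t) :
    ∑ z, kh P G ν t z ≤ 1 := by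
  rw [kh_mass hP0 hP1 hν0 hν1, ← (pois_hasSum t).tsum_eq]
  exact Summable.tsum_le_tsum (fun j => mul_le_of_le_one_right (pois_nonneg ht j)
    (kl_mass_le hP0 hP1 hν0 hν1 j)) (pois_summable t (mass_abs hP0 hP1 hν0 hν1))
    (pois_hasSum t).summable

lemma relH_deriv (hP0 : ∀ x y, 0 ≤ P x y) (hP1 : ∀ x, ∑ y, P x y = 1)
    (hν0 : ∀ x, 0 ≤ ν x) (hν1 : ∑ x, ν x ≤ 1) {t : ℝ} (ht : 0 < t) (g : ℝ) :
    HasDerivAt (fun t => relH g (kh P G ν t))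
      (∑ z, (∑ y, kh P G ν t y * killed P G y z - kh P G ν t z) *
        (Real.log (kh P G ν t z) - (Real.log (∑ y, kh P G ν t y) - Real.log g))) t := by
  have hab := kl_abs (G := G) hP0 hP1 hν0 hν1
  have hmab := mass_abs (G := G) hP0 hP1 hν0 hν1
  have h0 := fun z j => kl_nonneg (G := G) hP0 hν0 j z
  have e1 : ∀ z, ∑' j : ℕ, pois t j * kl P G ν (j + 1) z = ∑ y, kh P G ν t y * killed P G y z := by
    intro z
    simp_rw [kl_succ, kh]
    simp_rw [← tsum_mul_right]
    rw [← Summable.tsum_finsetSum (fun y _ => (pois_summable t (hab y)).mul_right _)]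
    simp_rw [Finset.mul_sum, mul_assoc]
  have d1 := fun z => pois_xlogx ht (h0 z) (hab z)
  have d2 := pois_xlogx ht (b := fun j => ∑ z, kl P G ν j z)
    (fun j => Finset.sum_nonneg fun z _ => h0 z j) hmab
  have d3 := pois_deriv t hmab
  have hd := ((HasDerivAt.fun_sum (u := Finset.univ) fun z _ => d1 z).sub d2).add
    (d3.mul_const (Real.log g))
  have hf : (fun t => relH g (kh P G ν t)) = (fun t =>
      (∑ z, (∑' j : ℕ, pois t j * kl P G ν j z) * Real.log (∑' j : ℕ, pois t j * kl P G ν j z)) -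
      (∑' j : ℕ, pois t j * ∑ z, kl P G ν j z) * Real.log (∑' j : ℕ, pois t j * ∑ z, kl P G ν j z)
      + (∑' j : ℕ, pois t j * ∑ z, kl P G ν j z) * Real.log g) := by
    funext s
    unfold relH
    rw [kh_mass hP0 hP1 hν0 hν1]
    simp only [kh]
  rw [hf]
  refine hd.congr_deriv ?_
  have e2 : ∑' j : ℕ, pois t j * ∑ z, kl P G ν (j + 1) z
      = ∑ z, ∑ y, kh P G ν t y * killed P G y z := by
    rw [← pois_sum_comm t (b := fun z j => kl P G ν (j + 1) z) (fun z j => hab z (j + 1))]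
    exact Finset.sum_congr rfl fun z _ => e1 z
  rw [e2, ← kh_mass hP0 hP1 hν0 hν1]
  simp_rw [e1]
  change ∑ z, (∑ y, kh P G ν t y * killed P G y z - kh P G ν t z) * (Real.log (kh P G ν t z) + 1)
    - _ + _ = _
  rw [← Finset.sum_sub_distrib, Finset.sum_mul, Finset.sum_mul, ← Finset.sum_sub_distrib,
    ← Finset.sum_add_distrib]
  exact Finset.sum_congr rfl fun z _ => by ring

lemma relH_cont (hP0 : ∀ x y, 0 ≤ P x y) (hP1 : ∀ x, ∑ y, P x y = 1)
    (hν0 : ∀ x, 0 ≤ ν x) (hν1 : ∑ x, ν x ≤ 1) (g : ℝ) :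
    Continuous (fun t => relH g (kh P G ν t)) := by
  have hc : ∀ z, Continuous (fun t => kh P G ν t z) := fun z =>
    continuous_iff_continuousAt.2 fun t => (pois_deriv t (kl_abs hP0 hP1 hν0 hν1 z)).continuousAt
  have hM : Continuous (fun t => ∑ z, kh P G ν t z) := continuous_finsetSum _ fun z _ => hc z
  unfold relH
  exact ((continuous_finsetSum _ fun z _ => Real.continuous_mul_log.comp (hc z)).sub
    (Real.continuous_mul_log.comp hM)).add (hM.mul_const _)

lemma relH_bound {A : ℝ} (hA : 0 < A) (hP0 : ∀ x y, 0 ≤ P x y) (hP1 : ∀ x, ∑ y, P x y = 1)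
    (hsym : ∀ x y, P x y = P y x)
    (hΩ : ∀ x ∈ Ω, ∀ y, P x y ≠ 0 → y ∈ Ω) (hGΩ : G ⊆ Ω) (hG : G.Nonempty)
    (hL : ∀ F : X → ℝ, (∀ x, 0 ≤ F x) → (∀ x, F x ≠ 0 → x ∈ G) →
        ent (unif X) (fun x => (F x) ^ 2) ≤ A * dirichlet (unif X) P F)
    (hν0 : ∀ x, 0 ≤ ν x) (hνs : ∀ x, x ∉ G → ν x = 0) (hν1 : ∑ x, ν x ≤ 1)
    {t : ℝ} (ht : 0 ≤ t) :
    relH G.card (kh P G ν t) ≤ Real.exp (-t / A) * Real.log Ω.card +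
      A * (((Ω.card : ℝ) - G.card) / G.card) := by
  have hg : (0:ℝ) < G.card := by exact_mod_cast hG.card_pos
  have hgΩ : (G.card:ℝ) ≤ Ω.card := by exact_mod_cast Finset.card_le_card hGΩ
  set c := ((Ω.card : ℝ) - G.card) / G.card with hc
  have hc0 : 0 ≤ c := div_nonneg (by linarith) hg.le
  set H := fun t => relH G.card (kh P G ν t) with hH
  have hsupp : ∀ t z, z ∉ G → kh P G ν t z = 0 := by
    intro t z hz
    unfold kh
    simp [kl_supp hνs _ z hz]
  have hd : ∀ s, 0 < s → ∃ d, HasDerivAt H d s ∧ d ≤ - H s / A + c := by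
    intro s hs
    refine ⟨_, relH_deriv hP0 hP1 hν0 hν1 hs _, ?_⟩
    have h1 := static_ineq hP0 hP1 hsym hΩ hGΩ hG (kh P G ν s) _
      (fun x => kh_nonneg hP0 hν0 hs.le x) (hsupp s) (fun z => rfl) (by
        intro z hz
        have hzz := pois_tsum_zero hs (fun j => kl_nonneg hP0 hν0 j z)
          (kl_abs hP0 hP1 hν0 hν1 z) hz
        rw [hz, sub_zero]
        apply Finset.sum_eq_zero
        intro y _
        unfold kh
        rw [← tsum_mul_right]
        convert tsum_zero with j
        have h2 := hzz (j + 1)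
        rw [kl_succ] at h2
        have h3 := (Finset.sum_eq_zero_iff_of_nonneg (fun y _ =>
          mul_nonneg (kl_nonneg hP0 hν0 j y) (killed_nonneg G hP0 y z))).1 h2 y (Finset.mem_univ y)
        rw [mul_assoc, h3, mul_zero]) (kh_mass_le hP0 hP1 hν0 hν1 hs.le)
    have h2 := lsi_relH hG hL (kh P G ν s) (fun x => kh_nonneg hP0 hν0 hs.le x) (hsupp s)
    have h3 : H s / A ≤ 1 / 2 * ∑ x, ∑ y, P x y *
        (Real.sqrt (kh P G ν s x) - Real.sqrt (kh P G ν s y)) ^ 2 := by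
      rw [div_le_iff₀ hA, mul_comm]; exact h2
    rw [neg_div]
    refine h1.trans ?_
    linarith
  have hHc : Continuous H := relH_cont hP0 hP1 hν0 hν1 _
  set φ := fun s => Real.exp (s / A) * (H s - A * c) with hφ
  have hφd : ∀ s, 0 < s → ∃ d, HasDerivAt φ d s ∧ d ≤ 0 := by
    intro s hs
    obtain ⟨d, hd1, hd2⟩ := hd s hs
    have h1 : HasDerivAt (fun s : ℝ => Real.exp (s / A)) (Real.exp (s / A) * (1 / A)) s :=
      ((hasDerivAt_id s).div_const A).exp
    refine ⟨_, h1.mul (hd1.sub_const _), ?_⟩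
    have : Real.exp (s / A) * (1 / A) * (H s - A * c) + Real.exp (s / A) * d =
      Real.exp (s / A) * (H s / A - c + d) := by field_simp
    rw [this]
    apply mul_nonpos_of_nonneg_of_nonpos (Real.exp_pos _).le
    rw [neg_div] at hd2
    linarith
  have hanti : AntitoneOn φ (Set.Ici 0) := by
    apply antitoneOn_of_deriv_nonpos (convex_Ici 0)
    · exact ((Real.continuous_exp.comp (continuous_id.div_const A)).mul
        (hHc.sub continuous_const)).continuousOn
    · intro s hs
      rw [interior_Ici] at hs
      obtain ⟨d, h1, _⟩ := hφd s hs
      exact h1.differentiableAt.differentiableWithinAt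
    · intro s hs
      rw [interior_Ici] at hs
      obtain ⟨d, h1, h2⟩ := hφd s hs
      rw [h1.deriv]; exact h2
  have h0 := hanti (Set.mem_Ici.2 le_rfl) (Set.mem_Ici.2 ht) ht
  have hk0 : kh P G ν 0 = ν := by
    funext z
    unfold kh
    rw [pois_zero, kl_zero]
  have hM0 : 0 ≤ ∑ x, ν x := Finset.sum_nonneg fun x _ => hν0 x
  have hlogΩ : Real.log G.card ≤ Real.log Ω.card := Real.log_le_log hg hgΩ
  have hlogG : 0 ≤ Real.log G.card := Real.log_natCast_nonneg _
  have hH0 : H 0 ≤ Real.log Ω.card := by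
    simp only [hH, hk0, relH]
    have h1 : ∑ x, ν x * Real.log (ν x) ≤ (∑ x, ν x) * Real.log (∑ x, ν x) := by
      rw [Finset.sum_mul]
      apply Finset.sum_le_sum
      intro x _
      rcases (hν0 x).eq_or_lt with h | h
      · rw [← h]; simp
      · exact mul_le_mul_of_nonneg_left (Real.log_le_log h
          (Finset.single_le_sum (f := ν) (fun x _ => hν0 x) (Finset.mem_univ x))) h.le
    have h2 : (∑ x, ν x) * Real.log G.card ≤ Real.log G.card := mul_le_of_le_one_left hlogG hν1
    linarith
  simp only [hφ, zero_div, Real.exp_zero, one_mul] at h0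
  have h1 : Real.exp (-t / A) * (Real.exp (t / A) * (H t - A * c)) = H t - A * c := by
    rw [← mul_assoc, ← Real.exp_add, neg_div, neg_add_cancel, Real.exp_zero, one_mul]
  have h2 := mul_le_mul_of_nonneg_left h0 (Real.exp_pos (-t / A)).le
  rw [h1] at h2
  have h3 : Real.exp (-t / A) * (H 0 - A * c) ≤ Real.exp (-t / A) * Real.log Ω.card := by
    apply mul_le_mul_of_nonneg_left _ (Real.exp_pos _).le
    have : 0 ≤ A * c := by positivity
    linarith
  change H t ≤ _
  linarith

end

section
variable {X : Type*} [Fintype X] [DecidableEq X] {P : Matrix X X ℝ} {Ω G : Finset X}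

lemma pow_nonneg_entry (hP0 : ∀ x y, 0 ≤ P x y) (n : ℕ) (x y : X) : 0 ≤ (P ^ n) x y := by
  induction n generalizing y with
  | zero => rw [pow_zero, Matrix.one_apply]; split_ifs <;> norm_num
  | succ n ih =>
    rw [pow_succ, Matrix.mul_apply]
    exact Finset.sum_nonneg fun z _ => mul_nonneg (ih z) (hP0 z y)

lemma pow_row_sum (hP1 : ∀ x, ∑ y, P x y = 1) (n : ℕ) (x : X) : ∑ y, (P ^ n) x y = 1 := by
  induction n with
  | zero => simp [Matrix.one_apply]
  | succ n ih =>
    simp_rw [pow_succ, Matrix.mul_apply]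
    rw [Finset.sum_comm]
    simp_rw [← Finset.mul_sum, hP1, mul_one]
    exact ih

lemma pow_absP (hP0 : ∀ x y, 0 ≤ P x y) (hP1 : ∀ x, ∑ y, P x y = 1) (n : ℕ) (x y : X) :
    |(P ^ n) x y| ≤ 1 := by
  rw [abs_of_nonneg (pow_nonneg_entry hP0 n x y), ← pow_row_sum hP1 n x]
  exact Finset.single_le_sum (f := fun y => (P ^ n) x y)
    (fun z _ => pow_nonneg_entry hP0 n x z) (Finset.mem_univ y)

lemma bth_eq (s : ℕ) (t : ℝ) (x z : X) :
    burnThenHeat P s t x z = ∑' j : ℕ, pois t j * (P ^ (s + j)) x z := rfl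

lemma bth_sum (hP0 : ∀ x y, 0 ≤ P x y) (hP1 : ∀ x, ∑ y, P x y = 1) (s : ℕ) (t : ℝ) (x : X) :
    ∑ z, burnThenHeat P s t x z = 1 := by
  simp_rw [bth_eq]
  rw [pois_sum_comm t (b := fun z j => (P ^ (s + j)) x z) (fun z j => pow_absP hP0 hP1 _ _ _)]
  simp_rw [pow_row_sum hP1, mul_one]
  exact (pois_hasSum t).tsum_eq

lemma bth_nonneg (hP0 : ∀ x y, 0 ≤ P x y) (s : ℕ) {t : ℝ} (ht : 0 ≤ t) (x z : X) :
    0 ≤ burnThenHeat P s t x z :=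
  tsum_nonneg fun j => mul_nonneg (pois_nonneg ht j) (pow_nonneg_entry hP0 _ _ _)

lemma bth_le_one (hP0 : ∀ x y, 0 ≤ P x y) (hP1 : ∀ x, ∑ y, P x y = 1) (s : ℕ) {t : ℝ}
    (ht : 0 ≤ t) (x z : X) : burnThenHeat P s t x z ≤ 1 := by
  rw [← bth_sum hP0 hP1 s t x]
  exact Finset.single_le_sum (f := fun z => burnThenHeat P s t x z)
    (fun z _ => bth_nonneg hP0 s ht x z) (Finset.mem_univ z)

lemma tv_bound {A η t : ℝ} {L : ℕ} (hA : 0 < A) (hP0 : ∀ x y, 0 ≤ P x y)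
    (hP1 : ∀ x, ∑ y, P x y = 1)
    (hsym : ∀ x y, P x y = P y x)
    (hΩ : ∀ x ∈ Ω, ∀ y, P x y ≠ 0 → y ∈ Ω) (hGΩ : G ⊆ Ω) (hG : G.Nonempty)
    (hL : ∀ F : X → ℝ, (∀ x, 0 ≤ F x) → (∀ x, F x ≠ 0 → x ∈ G) →
        ent (unif X) (fun x => (F x) ^ 2) ≤ A * dirichlet (unif X) P F)
    (ht : 0 ≤ t) (hL1 : 1 ≤ L) (hη : 0 ≤ η) (x : X) (s : ℕ)
    (hsoj : 1 - (∑ z, ((P ^ s) * (killed P G) ^ L) x z) ≤ η) :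
    tvDist (burnThenHeat P s t x) (fun x => if x ∈ Ω then (Ω.card : ℝ)⁻¹ else 0) ≤
      (η + ∑' j : ℕ, pois t j * (if L < j then 1 else 0)) +
      Real.sqrt ((Real.exp (-t / A) * Real.log Ω.card +
        A * (((Ω.card : ℝ) - G.card) / G.card)) / 2) + ((Ω.card : ℝ) - G.card) / Ω.card := by
  have hg : (0:ℝ) < G.card := by exact_mod_cast hG.card_pos
  have hgΩ : (G.card:ℝ) ≤ Ω.card := by exact_mod_cast Finset.card_le_card hGΩ
  have hω : (0:ℝ) < Ω.card := by linarith
  set ν : X → ℝ := fun y => if y ∈ G then (P ^ s) x y else 0 with hν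
  have hν0 : ∀ y, 0 ≤ ν y := by
    intro y; simp only [hν]; split_ifs; exacts [pow_nonneg_entry hP0 _ _ _, le_rfl]
  have hνs : ∀ y, y ∉ G → ν y = 0 := by intro y hy; simp [hν, hy]
  have hνle : ∀ y, ν y ≤ (P ^ s) x y := by
    intro y; simp only [hν]; split_ifs; exacts [le_rfl, pow_nonneg_entry hP0 _ _ _]
  have hν1 : ∑ y, ν y ≤ 1 := by
    rw [← pow_row_sum hP1 s x]; exact Finset.sum_le_sum fun y _ => hνle y
  have hkl : ∀ j z, kl P G ν j z ≤ (P ^ (s + j)) x z := by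
    intro j
    induction j with
    | zero => intro z; rw [kl_zero]; exact hνle z
    | succ j ih =>
      intro z
      rw [kl_succ, ← add_assoc, pow_succ, Matrix.mul_apply]
      exact Finset.sum_le_sum fun y _ => mul_le_mul (ih y) (killed_le G hP0 y z)
        (killed_nonneg G hP0 y z) (pow_nonneg_entry hP0 _ _ _)
  have hmL : ∑ z, kl P G ν L z = ∑ z, ((P ^ s) * (killed P G) ^ L) x z := by
    apply Finset.sum_congr rfl
    intro z _
    rw [Matrix.mul_apply, kl]
    apply Finset.sum_congr rfl
    intro y _
    by_cases hy : y ∈ G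
    · simp [hν, hy]
    · obtain ⟨l, rfl⟩ : ∃ l, L = l + 1 := ⟨L - 1, by omega⟩
      have : (killed P G ^ (l + 1)) y z = 0 := by
        rw [pow_succ', Matrix.mul_apply]
        exact Finset.sum_eq_zero fun w _ => by simp [killed, hy]
      rw [this, mul_zero, mul_zero]
  set k := kh P G ν t with hk
  set m := ∑ z, k z with hm
  set ζ := ∑' j : ℕ, pois t j * (if L < j then (1:ℝ) else 0) with hζ
  set R := Real.exp (-t / A) * Real.log Ω.card + A * (((Ω.card : ℝ) - G.card) / G.card) with hR
  have hm0 : 0 ≤ m := Finset.sum_nonneg fun z _ => kh_nonneg hP0 hν0 ht z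
  have hm1 : m ≤ 1 := kh_mass_le hP0 hP1 hν0 hν1 ht
  have hmab := mass_abs (G := G) hP0 hP1 hν0 hν1
  have hind : ∀ j : ℕ, |(if L < j then (1:ℝ) else 0)| ≤ 1 := by
    intro j; split_ifs <;> simp
  have hmlow : 1 - m ≤ η + ζ := by
    have e1 : 1 - m = ∑' j : ℕ, (pois t j - pois t j * ∑ z, kl P G ν j z) := by
      rw [Summable.tsum_sub (pois_hasSum t).summable (pois_summable t hmab),
        (pois_hasSum t).tsum_eq, hm, hk, kh_mass hP0 hP1 hν0 hν1]
    have e2 : η + ζ = ∑' j : ℕ, (pois t j * η + pois t j * (if L < j then (1:ℝ) else 0)) := by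
      rw [Summable.tsum_add ((pois_hasSum t).summable.mul_right η) (pois_summable t hind),
        tsum_mul_right, (pois_hasSum t).tsum_eq, one_mul]
    rw [e1, e2]
    apply Summable.tsum_le_tsum
    · intro j
      have h1 : 1 - ∑ z, kl P G ν j z ≤ η + if L < j then (1:ℝ) else 0 := by
        split_ifs with h
        · have : 0 ≤ ∑ z, kl P G ν j z := Finset.sum_nonneg fun z _ => kl_nonneg hP0 hν0 j z
          linarith
        · have := kl_mass_anti (G := G) hP0 hP1 hν0 (not_lt.1 h)
          simp only at this
          linarith
      have h2 := mul_le_mul_of_nonneg_left h1 (pois_nonneg ht j)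
      linarith
    · exact (pois_hasSum t).summable.sub (pois_summable t hmab)
    · exact ((pois_hasSum t).summable.mul_right η).add (pois_summable t hind)
  have hRb : relH G.card k ≤ R := relH_bound hA hP0 hP1 hsym hΩ hGΩ hG hL hν0 hνs hν1 ht
  have hR0 : 0 ≤ R := by
    have : 0 ≤ ((Ω.card : ℝ) - G.card) := by linarith
    have h2 : 0 ≤ Real.log Ω.card := Real.log_natCast_nonneg _
    positivity
  have hpin := pinsker_fin G hG k (fun z => kh_nonneg hP0 hν0 ht z) (by
    intro z hz
    simp only [hk, kh, kl_supp hνs _ z hz, mul_zero, tsum_zero])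
  rw [← hm] at hpin
  have hpin2 : Real.sqrt (2 * m * relH G.card k) ≤ 2 * Real.sqrt (R / 2) := by
    have : 2 * Real.sqrt (R / 2) = Real.sqrt (2 * R) := by
      rw [show 2 * R = 2 ^ 2 * (R / 2) by ring, Real.sqrt_mul (by norm_num), Real.sqrt_sq (by norm_num)]
    rw [this]
    apply Real.sqrt_le_sqrt
    nlinarith [mul_le_mul_of_nonneg_left hRb hm0]
  have hkb : ∀ z, k z ≤ burnThenHeat P s t x z := by
    intro z
    rw [bth_eq]
    exact Summable.tsum_le_tsum (fun j => mul_le_mul_of_nonneg_left (hkl j z) (pois_nonneg ht j))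
      (pois_summable t (kl_abs hP0 hP1 hν0 hν1 z))
      (pois_summable t fun j => pow_absP hP0 hP1 _ _ _)
  have hpt : ∀ z, |burnThenHeat P s t x z - (if z ∈ Ω then (Ω.card : ℝ)⁻¹ else 0)| ≤
      (burnThenHeat P s t x z - k z) + |k z - if z ∈ G then m / (G.card : ℝ) else 0| +
      (if z ∈ G then (1 - m) / (G.card : ℝ) else 0) +
      ((if z ∈ G then ((G.card : ℝ)⁻¹ - (Ω.card : ℝ)⁻¹) else 0) +
        (if z ∈ Ω \ G then (Ω.card : ℝ)⁻¹ else 0)) := by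
    intro z
    have h1 := hkb z
    have hi : (Ω.card : ℝ)⁻¹ ≤ (G.card : ℝ)⁻¹ := by gcongr
    have hi0 : 0 < (Ω.card : ℝ)⁻¹ := by positivity
    by_cases hz : z ∈ G
    · have hzΩ := hGΩ hz
      simp only [hz, hzΩ, if_true, Finset.mem_sdiff, not_true, and_false, if_false]
      have e : (1 - m) / (G.card : ℝ) = (G.card : ℝ)⁻¹ - m / G.card := by field_simp
      have h5 : 0 ≤ (1 - m) / (G.card : ℝ) := div_nonneg (by linarith) hg.le
      rw [abs_le]
      constructor
      · linarith [neg_abs_le (k z - m / (G.card : ℝ))]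
      · linarith [le_abs_self (k z - m / (G.card : ℝ))]
    · by_cases hzΩ : z ∈ Ω
      · simp only [hz, hzΩ, if_true, Finset.mem_sdiff, not_false_eq_true, and_true, if_false]
        rw [abs_le]
        constructor
        · linarith [neg_abs_le (k z - 0)]
        · linarith [le_abs_self (k z - 0)]
      · simp only [hz, hzΩ, if_false, Finset.mem_sdiff, false_and]
        rw [abs_le]
        constructor
        · linarith [neg_abs_le (k z - 0)]
        · linarith [le_abs_self (k z - 0)]
  have hsum := Finset.sum_le_sum (fun z (_ : z ∈ Finset.univ) => hpt z)
  simp only [Finset.sum_add_distrib, Finset.sum_sub_distrib, Finset.sum_ite_mem, Finset.univ_inter,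
    Finset.sum_const, nsmul_eq_mul, Finset.card_sdiff_of_subset hGΩ,
    Nat.cast_sub (Finset.card_le_card hGΩ)] at hsum
  rw [bth_sum hP0 hP1, ← hm] at hsum
  have e1 : (G.card : ℝ) * ((1 - m) / G.card) = 1 - m := by field_simp
  have e2 : (G.card : ℝ) * ((G.card : ℝ)⁻¹ - (Ω.card : ℝ)⁻¹) = ((Ω.card : ℝ) - G.card) / Ω.card := by
    field_simp
  have e3 : ((Ω.card : ℝ) - G.card) * (Ω.card : ℝ)⁻¹ = ((Ω.card : ℝ) - G.card) / Ω.card := rfl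
  rw [e1, e3] at hsum
  rw [mul_sub] at e2
  unfold tvDist
  linarith

lemma pois_add (u t : ℝ) (n : ℕ) :
    pois (u + t) n = ∑ p ∈ Finset.HasAntidiagonal.antidiagonal n, pois u p.1 * pois t p.2 := by
  unfold pois
  rw [neg_add, Real.exp_add, (Commute.all u t).add_pow', Finset.mul_sum, Finset.sum_div]
  apply Finset.sum_congr rfl
  intro p hp
  rw [Finset.HasAntidiagonal.mem_antidiagonal] at hp
  rw [← hp, nsmul_eq_mul]
  have h := Nat.add_choose_mul_factorial_mul_factorial p.1 p.2
  have h' : ((p.1 + p.2).choose p.1 : ℝ) * (Nat.factorial p.1 : ℝ) * (Nat.factorial p.2 : ℝ) =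
    (Nat.factorial (p.1 + p.2) : ℝ) := by
    rw [Nat.choose_symm_add]; exact_mod_cast h
  rw [← h']
  have h1 : ((p.1 + p.2).choose p.1 : ℝ) ≠ 0 := by
    exact_mod_cast (Nat.choose_pos (Nat.le_add_right _ _)).ne'
  field_simp

lemma bth_add (hP0 : ∀ x y, 0 ≤ P x y) (hP1 : ∀ x, ∑ y, P x y = 1) {u t : ℝ}
    (hu : 0 ≤ u) (ht : 0 ≤ t) (x z : X) :
    burnThenHeat P 0 (u + t) x z = ∑' i : ℕ, pois u i * burnThenHeat P i t x z := by
  have hs : Summable (fun p : ℕ × ℕ => pois u p.1 * pois t p.2 * (P ^ (p.1 + p.2)) x z) := by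
    apply Summable.of_norm_bounded
      ((pois_hasSum u).summable.mul_of_nonneg (pois_hasSum t).summable
        (fun j => pois_nonneg hu j) (fun j => pois_nonneg ht j))
    intro p
    rw [Real.norm_eq_abs, abs_mul, abs_of_nonneg (mul_nonneg (pois_nonneg hu _) (pois_nonneg ht _))]
    exact mul_le_of_le_one_right (mul_nonneg (pois_nonneg hu _) (pois_nonneg ht _))
      (pow_absP hP0 hP1 _ _ _)
  have h1 : ∑' p : ℕ × ℕ, pois u p.1 * pois t p.2 * (P ^ (p.1 + p.2)) x z =
      ∑' i : ℕ, pois u i * burnThenHeat P i t x z := by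
    rw [hs.tsum_prod]
    apply tsum_congr
    intro i
    rw [bth_eq, ← tsum_mul_left]
    simp only [mul_assoc]
  rw [← h1, ← Finset.HasAntidiagonal.sigmaAntidiagonalEquivProd.tsum_eq]
  have hs2 := Finset.HasAntidiagonal.sigmaAntidiagonalEquivProd.summable_iff.2 hs
  refine Eq.trans ?_ (Summable.tsum_sigma' (fun n => (hasSum_fintype _).summable) hs2).symm
  rw [bth_eq]
  apply tsum_congr
  intro n
  rw [tsum_fintype, pois_add, Finset.sum_mul, ← Finset.sum_coe_sort]
  apply Finset.sum_congr rfl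
  intro p _
  have hp := Finset.HasAntidiagonal.mem_antidiagonal.1 p.2
  simp [Finset.HasAntidiagonal.sigmaAntidiagonalEquivProd, hp]

lemma tv_mix (hP0 : ∀ x y, 0 ≤ P x y) (hP1 : ∀ x, ∑ y, P x y = 1) {u t B c : ℝ}
    (hu : 0 ≤ u) (ht : 0 ≤ t) (hB : 0 ≤ B) (x : X) (q : X → ℝ) (hq0 : ∀ z, 0 ≤ q z)
    (hq1 : ∑ z, q z = 1)
    (h : ∀ i : ℕ, c ≤ (i : ℝ) → tvDist (burnThenHeat P i t x) q ≤ B) :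
    tvDist (burnThenHeat P 0 (u + t) x) q ≤
      B + ∑' i : ℕ, pois u i * (if (i : ℝ) < c then 1 else 0) := by
  have hqle : ∀ z, q z ≤ 1 := fun z => by
    rw [← hq1]; exact Finset.single_le_sum (f := q) (fun z _ => hq0 z) (Finset.mem_univ z)
  have hb : ∀ z i, |burnThenHeat P i t x z| ≤ 1 := fun z i => by
    rw [abs_of_nonneg (bth_nonneg hP0 i ht x z)]; exact bth_le_one hP0 hP1 i ht x z
  have hd : ∀ z i, abs (|burnThenHeat P i t x z - q z|) ≤ 1 := fun z i => by
    rw [abs_abs, abs_le]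
    have h1 := bth_nonneg hP0 i ht x z
    have h2 := bth_le_one hP0 hP1 i ht x z
    constructor <;> linarith [hq0 z, hqle z]
  have hind : ∀ i : ℕ, |(if (i : ℝ) < c then (1:ℝ) else 0)| ≤ 1 := by
    intro j; split_ifs <;> simp
  have h1 : ∀ z, |burnThenHeat P 0 (u + t) x z - q z| ≤
      ∑' i : ℕ, pois u i * |burnThenHeat P i t x z - q z| := by
    intro z
    have e : burnThenHeat P 0 (u + t) x z - q z =
        ∑' i : ℕ, pois u i * (burnThenHeat P i t x z - q z) := by
      simp_rw [mul_sub]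
      rw [Summable.tsum_sub (pois_summable u (hb z)) ((pois_hasSum u).summable.mul_right _),
        tsum_mul_right, (pois_hasSum u).tsum_eq, one_mul, bth_add hP0 hP1 hu ht]
    rw [e]
    have e2 : ∀ i, ‖pois u i * (burnThenHeat P i t x z - q z)‖ =
        pois u i * |burnThenHeat P i t x z - q z| := by
      intro i
      rw [Real.norm_eq_abs, abs_mul, abs_of_nonneg (pois_nonneg hu i)]
    have h3 := norm_tsum_le_tsum_norm (f := fun i => pois u i * (burnThenHeat P i t x z - q z)) (by
      simp_rw [e2]; exact pois_summable u (hd z))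
    simp_rw [e2] at h3
    exact h3
  have h2 : ∑ z, |burnThenHeat P 0 (u + t) x z - q z| ≤
      ∑' i : ℕ, pois u i * ∑ z, |burnThenHeat P i t x z - q z| := by
    rw [← pois_sum_comm u hd]
    exact Finset.sum_le_sum fun z _ => h1 z
  have htv1 : ∀ i, tvDist (burnThenHeat P i t x) q ≤ 1 := by
    intro i
    have : ∑ z, |burnThenHeat P i t x z - q z| ≤ ∑ z, (burnThenHeat P i t x z + q z) := by
      apply Finset.sum_le_sum
      intro z _
      rw [abs_le]
      constructor <;> linarith [hq0 z, bth_nonneg hP0 i ht x z]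
    rw [Finset.sum_add_distrib, hq1, bth_sum hP0 hP1] at this
    unfold tvDist; linarith
  have htv0 : ∀ i, 0 ≤ tvDist (burnThenHeat P i t x) q := by
    intro i; unfold tvDist; positivity
  have h3 : tvDist (burnThenHeat P 0 (u + t) x) q ≤
      ∑' i : ℕ, pois u i * tvDist (burnThenHeat P i t x) q := by
    have e : ∑' i : ℕ, pois u i * tvDist (burnThenHeat P i t x) q =
        (1 / 2) * ∑' i : ℕ, pois u i * ∑ z, |burnThenHeat P i t x z - q z| := by
      rw [← tsum_mul_left]
      apply tsum_congr
      intro i; unfold tvDist; ring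
    rw [e]
    unfold tvDist
    linarith
  refine h3.trans ?_
  have e4 : B + ∑' i : ℕ, pois u i * (if (i : ℝ) < c then (1:ℝ) else 0) =
      ∑' i : ℕ, (pois u i * B + pois u i * (if (i : ℝ) < c then (1:ℝ) else 0)) := by
    rw [Summable.tsum_add ((pois_hasSum u).summable.mul_right B) (pois_summable u hind),
      tsum_mul_right, (pois_hasSum u).tsum_eq, one_mul]
  rw [e4]
  apply Summable.tsum_le_tsum
  · intro i
    rw [← mul_add]
    apply mul_le_mul_of_nonneg_left _ (pois_nonneg hu i)
    split_ifs with hi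
    · linarith [htv1 i]
    · linarith [h i (not_lt.1 hi)]
  · exact pois_summable u fun i => by rw [abs_of_nonneg (htv0 i)]; exact htv1 i
  · exact ((pois_hasSum u).summable.mul_right B).add (pois_summable u hind)

end

theorem stmt7 :
    ∀ (S : Type) [Fintype S] [DecidableEq S] [Nonempty S] (N : ℕ), 1 ≤ N →
    ∀ (K : Fin N → (Fin N → S) → Matrix S S ℝ) (P : Matrix (Fin N → S) (Fin N → S) ℝ)
      (Ω G : Finset (Fin N → S)) (A tstar η : ℝ) (L : ℕ),
      -- coordinate-replacement structure of P
      (∀ i x u v, 0 ≤ K i x u v) →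
      (∀ i x u, (∑ v, K i x u v) = 1) →
      (∀ i x u v, K i x u v = K i x v u) →
      (∀ i (x y : Fin N → S), (∀ j, j ≠ i → x j = y j) → K i x = K i y) →
      (∀ x y, P x y =
        (1 / (N : ℝ)) * ∑ i, ∑ u, (if y = Function.update x i u then K i x (x i) u else 0)) →
      (∀ x y, P x y = P y x) →
      -- Ω is P-invariant with μ(Ω) > 0, and G ⊆ Ω with π(G) > 0
      (∀ x ∈ Ω, ∀ y, P x y ≠ 0 → y ∈ Ω) →
      Ω.Nonempty → G.Nonempty → G ⊆ Ω →
      0 < A →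
      -- (i) local log-Sobolev inequality on G
      (∀ F : (Fin N → S) → ℝ, (∀ x, 0 ≤ F x) → (∀ x, F x ≠ 0 → x ∈ G) →
        ent (unif (Fin N → S)) (fun x => (F x) ^ 2) ≤ A * dirichlet (unif (Fin N → S)) P F) →
      0 ≤ tstar → 1 ≤ L → 0 ≤ η →
      -- (ii) burn-in/sojourn estimate: after any burn-in s ≥ t_*, the chain stays in G
      -- for L more steps except with probability η
      (∀ x ∈ Ω, ∀ s : ℕ, tstar ≤ (s : ℝ) →
        1 - (∑ z, ((P ^ s) * (killed P G) ^ L) x z) ≤ η) →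
      -- definitions of π, t_conf, ζ and R
      (let π : (Fin N → S) → ℝ := fun x => if x ∈ Ω then (Ω.card : ℝ)⁻¹ else 0;
       let tconf : ℝ := 2 * A * Real.log (Real.exp 1 + Real.log (Ω.card));
       let ζ : ℝ :=
         ∑' j : ℕ, if L < j then Real.exp (-tconf) * tconf ^ j / (Nat.factorial j) else 0;
       let πGc : ℝ := ((Ω.card : ℝ) - (G.card : ℝ)) / (Ω.card : ℝ);
       let R : ℝ := Real.exp (-tconf / A) * Real.log (Ω.card) +
         A * (πGc / ((G.card : ℝ) / (Ω.card : ℝ)));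
       -- conclusion 1: total-variation bound after burn-in plus confinement time
       (∀ x ∈ Ω, ∀ s : ℕ, tstar ≤ (s : ℝ) →
          tvDist (burnThenHeat P s tconf x) π ≤
            2 * (η + ζ) + Real.sqrt (R / 2) + πGc) ∧
       -- conclusion 2: continuous-time mixing-time bound
       (2 * (η + ζ) + Real.sqrt (R / 2) + πGc +
          (∑' j : ℕ, if (j : ℝ) < tstar then
            Real.exp (-(2 * tstar)) * (2 * tstar) ^ j / (Nat.factorial j) else 0) ≤ 1 / 4 →
        sInf {t : ℝ | 0 ≤ t ∧ ∀ x ∈ Ω, tvDist (burnThenHeat P 0 t x) π ≤ 1 / 4} ≤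
          2 * tstar + tconf)) := by
  intro S _ _ _ N hN K P Ω G A tstar η L hK0 hK1 _ _ hP hsym hΩ hΩne hG hGΩ hA hL hts hL1 hη hsoj
  intro π tconf ζ πGc R
  have hNp : (0:ℝ) < N := by exact_mod_cast hN
  have hP0 : ∀ x y, 0 ≤ P x y := by
    intro x y
    rw [hP]
    refine mul_nonneg (by positivity) (Finset.sum_nonneg fun i _ => Finset.sum_nonneg fun u _ => ?_)
    split_ifs
    exacts [hK0 _ _ _ _, le_rfl]
  have hP1 : ∀ x, ∑ y, P x y = 1 := by
    intro x
    simp_rw [hP]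
    rw [← Finset.mul_sum, Finset.sum_comm]
    have : ∀ i : Fin N, ∑ y, ∑ u, (if y = Function.update x i u then K i x (x i) u else 0) = 1 := by
      intro i
      rw [Finset.sum_comm, ← hK1 i x (x i)]
      apply Finset.sum_congr rfl
      intro u _
      simp
    simp_rw [this]
    simp only [Finset.sum_const, Finset.card_univ, Fintype.card_fin, nsmul_eq_mul, mul_one]
    field_simp
  have hg : (0:ℝ) < G.card := by exact_mod_cast hG.card_pos
  have hgΩ : (G.card:ℝ) ≤ Ω.card := by exact_mod_cast Finset.card_le_card hGΩ
  have hω : (0:ℝ) < Ω.card := by linarith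
  have htc : 0 ≤ tconf := by
    have h1 : 0 ≤ Real.log (Ω.card : ℝ) := Real.log_natCast_nonneg _
    have h2 : 1 ≤ Real.exp 1 + Real.log (Ω.card) := by
      have := Real.add_one_le_exp (1:ℝ); linarith
    have h3 := Real.log_nonneg h2
    exact mul_nonneg (by linarith) h3
  have hζ : ζ = ∑' j : ℕ, pois tconf j * (if L < j then (1:ℝ) else 0) := by
    apply tsum_congr
    intro j
    simp only [mul_ite, mul_one, mul_zero]
    rfl
  have hζ0 : 0 ≤ ζ := by
    rw [hζ]
    refine tsum_nonneg fun j => mul_nonneg (pois_nonneg htc j) ?_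
    split_ifs <;> norm_num
  have hπ0 : 0 ≤ πGc := div_nonneg (by linarith) hω.le
  have hR : R = Real.exp (-tconf / A) * Real.log Ω.card +
      A * (((Ω.card : ℝ) - G.card) / G.card) := by
    have : πGc / ((G.card : ℝ) / (Ω.card : ℝ)) = ((Ω.card : ℝ) - G.card) / G.card := by
      change ((Ω.card : ℝ) - (G.card : ℝ)) / (Ω.card : ℝ) / _ = _
      field_simp
    change _ + A * (πGc / ((G.card : ℝ) / (Ω.card : ℝ))) = _
    rw [this]
  have main : ∀ x ∈ Ω, ∀ s : ℕ, tstar ≤ (s : ℝ) →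
          tvDist (burnThenHeat P s tconf x) π ≤
            2 * (η + ζ) + Real.sqrt (R / 2) + πGc := by
    intro x hx s hs
    have h := tv_bound hA hP0 hP1 hsym hΩ hGΩ hG hL htc hL1 hη x s (hsoj x hx s hs)
    rw [← hζ, ← hR] at h
    change tvDist (burnThenHeat P s tconf x) π ≤ η + ζ + Real.sqrt (R / 2) + πGc at h
    linarith
  refine ⟨main, ?_⟩
  intro hq
  apply csInf_le ⟨0, fun t ht => ht.1⟩
  refine ⟨by linarith, ?_⟩
  intro x hx
  have h := tv_mix hP0 hP1 (u := 2 * tstar) (t := tconf)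
    (B := 2 * (η + ζ) + Real.sqrt (R / 2) + πGc) (c := tstar) (by linarith) htc
    (by positivity) x π
    (by intro z; change 0 ≤ (if z ∈ Ω then (Ω.card : ℝ)⁻¹ else 0); split_ifs <;> positivity)
    (by
      change ∑ z, (if z ∈ Ω then (Ω.card : ℝ)⁻¹ else 0) = 1
      rw [Finset.sum_ite_mem, Finset.univ_inter, Finset.sum_const, nsmul_eq_mul]
      field_simp)
    (fun i hi => main x hx i hi)
  refine h.trans (le_trans (le_of_eq ?_) hq)
  congr 1
  apply tsum_congr
  intro j
  simp only [mul_ite, mul_one, mul_zero]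
  rfl
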